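/- arXiv:2308.16867 — 2 statements merged into one kernel-verified Lean document; each statement's English description precedes it below -/
import Mathlib

section
/- A topological space X is a uniformizable Alexandroff space if and only if X is an Alexandroff space and for every a ∈ X and every b ∈ V(a) one has V(b) = V(a). -/
open Set

variable {X : Type*}

/-- `V a` : the intersection of all open neighbourhoods of `a`. -/
def V [TopologicalSpace X] (a : X) : Set X :=
  ⋂₀ {U : Set X | IsOpen U ∧ a ∈ U}

/-- A topological space is uniformizable if its topology is induced by some
uniform structure. -/
def Uniformizable (X : Type*) [t : TopologicalSpace X] : Prop :=
  ∃ u : UniformSpace X, u.toTopologicalSpace = t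

theorem mem_V_iff_specializes [TopologicalSpace X] {a b : X} : b ∈ V a ↔ b ⤳ a := by
  simp only [V, mem_sInter, mem_ofPred_eq, and_imp, specializes_iff_forall_open]

theorem mem_V_self [TopologicalSpace X] (a : X) : a ∈ V a :=
  mem_V_iff_specializes.2 specializes_rfl

theorem V_eq_of_inseparable [TopologicalSpace X] {a b : X} (h : Inseparable a b) :
    V a = V b := by
  ext c
  rw [mem_V_iff_specializes, mem_V_iff_specializes]
  exact ⟨fun hc => hc.trans h.specializes, fun hc => hc.trans h.specializes'⟩

theorem nhds_eq_principal_V [TopologicalSpace X] {a : X} (h : IsOpen (V a)) :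
    nhds a = Filter.principal (V a) := by
  refine le_antisymm (Filter.le_principal_iff.2 (h.mem_nhds (mem_V_self a))) fun s hs => ?_
  obtain ⟨U, hUs, hU, haU⟩ := mem_nhds_iff.1 hs
  exact Filter.mem_principal.2 fun b hb => hUs (mem_sInter.1 hb U ⟨hU, haU⟩)

/-- If the sets `V a` are open and partition `X`, the topology is pulled back along `V` from the
discrete uniformity on `Set X`. -/
theorem uniformizable_of_V_eq [TopologicalSpace X] (hopen : ∀ a : X, IsOpen (V a))
    (hV : ∀ a : X, ∀ b ∈ V a, V b = V a) : Uniformizable X := by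
  let _ : UniformSpace (Set X) := ⊥
  have : DiscreteTopology (Set X) := ⟨rfl⟩
  refine ⟨UniformSpace.comap V inferInstance, TopologicalSpace.ext_nhds fun a => ?_⟩
  have hfiber : V ⁻¹' {V a} = V a :=
    Subset.antisymm (fun b hb => (show V b = V a from hb) ▸ mem_V_self b) (hV a)
  rw [nhds_eq_principal_V (hopen a), UniformSpace.toTopologicalSpace_comap,
    nhds_induced, nhds_discrete, Filter.comap_pure, hfiber]

/-- `X` is a uniformizable Alexandroff space iff `X` is an Alexandroff space and
`V b = V a` for every `a ∈ X` and every `b ∈ V a`. -/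
theorem stmt6 [TopologicalSpace X] :
    ((∀ a : X, IsOpen (V a)) ∧ Uniformizable X) ↔
      ((∀ a : X, IsOpen (V a)) ∧ ∀ a : X, ∀ b ∈ V a, V b = V a) := by
  refine and_congr_right fun hopen => ⟨?_, uniformizable_of_V_eq hopen⟩
  rintro ⟨u, rfl⟩ a b hb
  exact V_eq_of_inseparable (mem_V_iff_specializes.1 hb).inseparable
end

section
/- For a self-map f : X → X of a set X, the functional Alexandroff topology on X corresponding to f is uniformizable if and only if every point of X is a periodic point of f, i.e., Per(f) = X. -/
open Set

variable {X : Type*}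

/-- A topology `t` on `X` is uniformizable if it is induced by some uniform
structure. -/
def UniformizableTop {X : Type*} (t : TopologicalSpace X) : Prop :=
  ∃ u : UniformSpace X, u.toTopologicalSpace = t

/-- `Vf f a = ⋃ₙ f⁻ⁿ(a)` : the union of the preimages of `{a}` under all
iterates of `f` (including the 0-th iterate). -/
def Vf (f : X → X) (a : X) : Set X :=
  ⋃ n : ℕ, (f^[n]) ⁻¹' {a}

/-- The functional Alexandroff topology on `X` corresponding to `f`, generated
by the basis `{Vf f a : a ∈ X}`. -/
def funcAlexTop (f : X → X) : TopologicalSpace X :=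
  TopologicalSpace.generateFrom {S : Set X | ∃ a : X, S = Vf f a}

open Topology

theorem mem_Vf {f : X → X} {a y : X} : y ∈ Vf f a ↔ ∃ n : ℕ, f^[n] y = a := by
  simp [Vf]

theorem self_mem_Vf (f : X → X) (a : X) : a ∈ Vf f a :=
  mem_Vf.2 ⟨0, rfl⟩

theorem Vf_subset_of_mem {f : X → X} {a y : X} (h : y ∈ Vf f a) : Vf f y ⊆ Vf f a := by
  obtain ⟨n, rfl⟩ := mem_Vf.1 h
  intro z hz
  obtain ⟨m, rfl⟩ := mem_Vf.1 hz
  exact mem_Vf.2 ⟨n + m, Function.iterate_add_apply f n m z⟩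

theorem isOpen_Vf (f : X → X) (a : X) : IsOpen[funcAlexTop f] (Vf f a) :=
  TopologicalSpace.isOpen_generateFrom_of_mem ⟨a, rfl⟩

/-- Every point specializes to its image in the functional Alexandroff topology. -/
theorem specializes_apply (f : X → X) (x : X) : @Specializes X (funcAlexTop f) x (f x) := by
  let _ := funcAlexTop f
  refine le_of_le_of_eq ?_ (TopologicalSpace.nhds_generateFrom (a := f x)).symm
  refine le_iInf₂ fun s hs => ?_
  obtain ⟨hxs, a, rfl⟩ := hs
  obtain ⟨n, hn⟩ := mem_Vf.1 hxs
  exact Filter.le_principal_iff.2 ((isOpen_Vf f a).mem_nhds (mem_Vf.2 ⟨n + 1, hn⟩))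

theorem mem_Vf_symm {f : X → X} {a y : X} (hy : ∃ n : ℕ, 0 < n ∧ f^[n] y = y)
    (h : y ∈ Vf f a) : a ∈ Vf f y := by
  obtain ⟨k, hk, hky⟩ := hy
  obtain ⟨n, rfl⟩ := mem_Vf.1 h
  refine mem_Vf.2 ⟨n * k - n, ?_⟩
  rw [← Function.iterate_add_apply, Nat.sub_add_cancel (Nat.le_mul_of_pos_right n hk)]
  exact Function.IsPeriodicPt.const_mul hky n

theorem Vf_eq_iff_mem {f : X → X} {a y : X} (hy : ∃ n : ℕ, 0 < n ∧ f^[n] y = y) :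
    Vf f y = Vf f a ↔ y ∈ Vf f a :=
  ⟨fun h => h ▸ self_mem_Vf f y, fun h =>
    (Vf_subset_of_mem h).antisymm (Vf_subset_of_mem (mem_Vf_symm hy h))⟩

/-- If all points are periodic, the functional Alexandroff topology is the partition topology
whose blocks are the sets `Vf f a`. -/
theorem induced_Vf_eq_funcAlexTop {f : X → X} (hf : ∀ x : X, ∃ n : ℕ, 0 < n ∧ f^[n] x = x) :
    TopologicalSpace.induced (Vf f) ⊥ = funcAlexTop f := by
  apply le_antisymm
  · refine le_generateFrom ?_
    rintro _ ⟨a, rfl⟩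
    exact ⟨{Vf f a}, trivial, ext fun y => Vf_eq_iff_mem (hf y)⟩
  · rintro _ ⟨S, -, rfl⟩
    let _ := funcAlexTop f
    refine isOpen_iff_forall_mem_open.2 fun x hx => ⟨Vf f x, fun y hy => ?_, isOpen_Vf f x,
      self_mem_Vf f x⟩
    rwa [mem_preimage, (Vf_eq_iff_mem (hf y)).2 hy]

/-- The functional Alexandroff topology corresponding to `f : X → X` is
uniformizable iff every point of `X` is a periodic point of `f`. -/
theorem stmt13 (f : X → X) :
    UniformizableTop (funcAlexTop f) ↔
      ∀ x : X, ∃ n : ℕ, 0 < n ∧ f^[n] x = x := by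
  constructor
  · rintro ⟨u, hu⟩ x
    have hs : x ⤳ f x := by
      rw [hu]
      exact specializes_apply f x
    have hx : f x ∈ Vf f x :=
      hs.symm.mem_open (hu ▸ isOpen_Vf f x) (self_mem_Vf f x)
    obtain ⟨n, hn⟩ := mem_Vf.1 hx
    exact ⟨n + 1, n.succ_pos, hn⟩
  · intro hf
    exact ⟨UniformSpace.comap (Vf f) ⊥, induced_Vf_eq_funcAlexTop hf⟩
end
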